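/- (Clarkson inequality for Schatten classes, case 1 < p ≤ 2.) Let 1 < p ≤ 2 and q = p/(p−1). For all T₁, T₂ in the Schatten class S_p(H) one has (‖T₁ + T₂‖_p^q + ‖T₁ − T₂‖_p^q)^{1/q} ≤ 2^{1/q} (‖T₁‖_p^p + ‖T₂‖_p^p)^{1/p}. -/

import Mathlib

open scoped InnerProductSpace ENNReal Topology
open Filter

/-- An Orlicz function (N-function): convex, nondecreasing and continuous on `[0, ∞)`,
vanishing at `0`, positive on `(0, ∞)` and tending to `∞` at `∞`. -/
structure OrliczFunction : Type where
  toFun : ℝ → ℝ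
  convexOn : ConvexOn ℝ (Set.Ici (0 : ℝ)) toFun
  monotoneOn : MonotoneOn toFun (Set.Ici (0 : ℝ))
  continuousOn : ContinuousOn toFun (Set.Ici (0 : ℝ))
  map_zero : toFun 0 = 0
  pos : ∀ x : ℝ, 0 < x → 0 < toFun x
  tendsto_atTop : Filter.Tendsto toFun Filter.atTop Filter.atTop

/-- `ψ` is the complementary N-function of `φ`: `ψ(y) = sup {x·y − φ(x) : x ≥ 0}`. -/
def OrliczFunction.IsComplementary (φ ψ : OrliczFunction) : Prop :=
  ∀ y : ℝ, 0 ≤ y → ψ.toFun y = sSup {v : ℝ | ∃ x : ℝ, 0 ≤ x ∧ v = x * y - φ.toFun x}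

/-- `g` is the (two-sided) inverse of `f` on `[0, ∞)`, taking nonnegative values. -/
def IsOrliczInverse (g f : ℝ → ℝ) : Prop :=
  (∀ u : ℝ, 0 ≤ u → 0 ≤ g u) ∧ (∀ u : ℝ, 0 ≤ u → f (g u) = u) ∧
    ∀ u : ℝ, 0 ≤ u → g (f u) = u

variable {H : Type} [NormedAddCommGroup H] [InnerProductSpace ℂ H] [CompleteSpace H]

/-- The `n`-th singular value of an operator `T` (indexed from `n = 0`), described as the
`n`-th approximation number: the distance from `T` to the operators of rank `≤ n`.  For a
compact operator on a Hilbert space this is exactly the `(n+1)`-st eigenvalue of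
`|T| = (T*T)^(1/2)` in decreasing order. -/
noncomputable def sValue (T : H →L[ℂ] H) (n : ℕ) : ℝ :=
  sInf {c : ℝ | ∃ F : H →L[ℂ] H,
    Module.rank ℂ (LinearMap.range F.toLinearMap) ≤ (n : Cardinal) ∧ c = ‖T - F‖}

/-- `tr(φ(|T|)) = Σ_n φ(s_n(T))`. -/
noncomputable def orliczSum (φ : OrliczFunction) (T : H →L[ℂ] H) : ℝ :=
  ∑' n : ℕ, φ.toFun (sValue T n)

/-- Membership in the noncommutative Orlicz sequence space `S_φ(H)`:
`T` is compact and `Σ_n φ(λ s_n(T)) < ∞` for some `λ > 0`. -/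
def MemS (φ : OrliczFunction) (T : H →L[ℂ] H) : Prop :=
  IsCompactOperator (⇑T) ∧
    ∃ l : ℝ, 0 < l ∧ Summable fun n : ℕ => φ.toFun (l * sValue T n)

/-- The Luxemburg norm `‖T‖_(φ) = inf {λ > 0 : Σ_n φ(s_n(T)/λ) ≤ 1}`. -/
noncomputable def luxNorm (φ : OrliczFunction) (T : H →L[ℂ] H) : ℝ :=
  sInf {l : ℝ | 0 < l ∧ (Summable fun n : ℕ => φ.toFun (sValue T n / l)) ∧
    ∑' n : ℕ, φ.toFun (sValue T n / l) ≤ 1}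

/-- The Orlicz norm `‖T‖_φ = sup {tr |TB| : tr(ψ(B)) ≤ 1}`, expressed through the
complementary function `ψ` of `φ` (here `tr|TB| = Σ_n s_n(TB)`). -/
noncomputable def orlNormVia (ψ : OrliczFunction) (T : H →L[ℂ] H) : ℝ :=
  sSup {c : ℝ | ∃ B : H →L[ℂ] H, IsCompactOperator (⇑B) ∧
    (Summable fun n : ℕ => ψ.toFun (sValue B n)) ∧
    (∑' n : ℕ, ψ.toFun (sValue B n)) ≤ 1 ∧ c = ∑' n : ℕ, sValue (T ∘L B) n}

/-- The norm `‖T‖_((φ),p) = (‖T₁‖_(φ₁)^p + ‖T₂‖_(φ₂)^p)^(1/p)` on 2-tuples. -/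
noncomputable def luxNorm2 (φ₁ φ₂ : OrliczFunction) (p : ℝ) (T₁ T₂ : H →L[ℂ] H) : ℝ :=
  (luxNorm φ₁ T₁ ^ p + luxNorm φ₂ T₂ ^ p) ^ (1 / p)

/-- The Orlicz-type norm `‖T‖_(φ,p) = (‖T₁‖_φ₁^p + ‖T₂‖_φ₂^p)^(1/p)` on 2-tuples,
where the Orlicz norms are computed via the complementary functions `ψ₁, ψ₂`. -/
noncomputable def orlNorm2 (ψ₁ ψ₂ : OrliczFunction) (p : ℝ) (T₁ T₂ : H →L[ℂ] H) : ℝ :=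
  (orlNormVia ψ₁ T₁ ^ p + orlNormVia ψ₂ T₂ ^ p) ^ (1 / p)

/-- 2-tuple Luxemburg norm for an exponent `r ∈ [1, ∞]`. -/
noncomputable def luxNorm2E (φ₁ φ₂ : OrliczFunction) (r : ℝ≥0∞) (T₁ T₂ : H →L[ℂ] H) : ℝ :=
  if r = ⊤ then max (luxNorm φ₁ T₁) (luxNorm φ₂ T₂)
  else (luxNorm φ₁ T₁ ^ r.toReal + luxNorm φ₂ T₂ ^ r.toReal) ^ (1 / r.toReal)

/-- The trace of an operator, computed along a Hilbert basis. -/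
noncomputable def traceAlong {ι : Type} (b : HilbertBasis ι ℂ H) (T : H →L[ℂ] H) : ℂ :=
  ∑' i : ι, ⟪b i, T (b i)⟫_ℂ

/-- The Schatten `p`-norm `‖T‖_p = (Σ_n s_n(T)^p)^(1/p)`. -/
noncomputable def schattenNorm (p : ℝ) (T : H →L[ℂ] H) : ℝ :=
  (∑' n : ℕ, sValue T n ^ p) ^ (1 / p)

/-- Membership in the Schatten class `S_p(H)`. -/
def MemSp (p : ℝ) (T : H →L[ℂ] H) : Prop :=
  IsCompactOperator (⇑T) ∧ Summable fun n : ℕ => sValue T n ^ p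

/-- The nonsquare constant `J` of the noncommutative Orlicz space `S_φ(H)`
(with the Luxemburg norm). -/
noncomputable def JOrlicz (φ : OrliczFunction) : ℝ :=
  sSup {c : ℝ | ∃ T B : H →L[ℂ] H, MemS φ T ∧ MemS φ B ∧
    luxNorm φ T = 1 ∧ luxNorm φ B = 1 ∧
    c = min (luxNorm φ (T + B)) (luxNorm φ (T - B))}

/-- The von Neumann–Jordan constant of `S_φ(H)` (with the Luxemburg norm): the smallest
`c > 0` such that `1/c ≤ (‖x+y‖² + ‖x−y‖²)/(2(‖x‖² + ‖y‖²)) ≤ c` for all `x, y` in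
`S_φ(H)` not both zero. -/
noncomputable def cNJOrlicz (φ : OrliczFunction) : ℝ :=
  sInf {c : ℝ | 0 < c ∧ ∀ T B : H →L[ℂ] H, MemS φ T → MemS φ B → ¬(T = 0 ∧ B = 0) →
    1 / c ≤ (luxNorm φ (T + B) ^ 2 + luxNorm φ (T - B) ^ 2) /
        (2 * (luxNorm φ T ^ 2 + luxNorm φ B ^ 2)) ∧
      (luxNorm φ (T + B) ^ 2 + luxNorm φ (T - B) ^ 2) /
        (2 * (luxNorm φ T ^ 2 + luxNorm φ B ^ 2)) ≤ c}

/-- The von Neumann–Jordan constant of the Schatten class `S_p(H)`. -/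
noncomputable def cNJSchatten (p : ℝ) : ℝ :=
  sInf {c : ℝ | 0 < c ∧ ∀ T B : H →L[ℂ] H, MemSp p T → MemSp p B → ¬(T = 0 ∧ B = 0) →
    1 / c ≤ (schattenNorm p (T + B) ^ 2 + schattenNorm p (T - B) ^ 2) /
        (2 * (schattenNorm p T ^ 2 + schattenNorm p B ^ 2)) ∧
      (schattenNorm p (T + B) ^ 2 + schattenNorm p (T - B) ^ 2) /
        (2 * (schattenNorm p T ^ 2 + schattenNorm p B ^ 2)) ≤ c}


section Interpolation

variable {K : Type*} [NormedAddCommGroup K] [InnerProductSpace ℂ K]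

theorem norm_sum_smul_sq_of_orthonormal {ι : Type*} [Fintype ι] {u : ι → K}
    (hu : Orthonormal ℂ u) (a : ι → ℂ) : ‖∑ j, a j • u j‖ ^ 2 = ∑ j, ‖a j‖ ^ 2 := by
  have h := hu.inner_sum a a Finset.univ
  rw [inner_self_eq_norm_sq_to_K] at h
  have h2 : ∀ j, (starRingEnd ℂ) (a j) * a j = ((‖a j‖ ^ 2 : ℝ) : ℂ) := fun j => by
    rw [RCLike.conj_mul]; push_cast; rfl
  simp only [h2] at h
  rw [← Complex.ofReal_inj]
  push_cast at h ⊢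
  exact h

theorem norm_sum_mul_inner_le_sqrt {κ : Type*} [Fintype κ] {v : κ → K}
    (hv : Orthonormal ℂ v) (x : κ → ℂ) (w : K) :
    ‖∑ k, x k * ⟪v k, w⟫_ℂ‖ ≤ √(∑ k, ‖x k‖ ^ 2) * ‖w‖ := by
  have h : ∑ k, x k * ⟪v k, w⟫_ℂ = ⟪∑ k, (starRingEnd ℂ) (x k) • v k, w⟫_ℂ := by
    simp [mul_comm]
  rw [h]
  refine (norm_inner_le_norm _ _).trans ?_
  gcongr
  refine Real.le_sqrt_of_sq_le ?_
  rw [norm_sum_smul_sq_of_orthonormal hv]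
  simp

theorem norm_sum_mul_inner_le_mul_sum {ι κ : Type*} [Fintype ι] [Fintype κ] {u : ι → K}
    {v : κ → K} (huv : ∀ j, ∑ k, ‖⟪v k, u j⟫_ℂ‖ ≤ 1) (a : ι → ℂ) (x : κ → ℂ) {X : ℝ}
    (hX : 0 ≤ X) (hx : ∀ k, ‖x k‖ ≤ X) :
    ‖∑ k, x k * ⟪v k, ∑ j, a j • u j⟫_ℂ‖ ≤ X * ∑ j, ‖a j‖ := by
  have h : ∑ k, x k * ⟪v k, ∑ j, a j • u j⟫_ℂ = ∑ j, a j * ∑ k, x k * ⟪v k, u j⟫_ℂ := by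
    simp only [inner_sum, inner_smul_right, Finset.mul_sum]
    rw [Finset.sum_comm]
    exact Finset.sum_congr rfl fun j _ => Finset.sum_congr rfl fun k _ => by ring
  rw [h, Finset.mul_sum]
  refine (norm_sum_le _ _).trans (Finset.sum_le_sum fun j _ => ?_)
  rw [norm_mul, mul_comm]
  gcongr
  calc ‖∑ k, x k * ⟪v k, u j⟫_ℂ‖ ≤ ∑ k, X * ‖⟪v k, u j⟫_ℂ‖ :=
        (norm_sum_le _ _).trans (Finset.sum_le_sum fun k _ => by
          rw [norm_mul]; gcongr; exact hx k)
    _ = X * ∑ k, ‖⟪v k, u j⟫_ℂ‖ := by rw [Finset.mul_sum]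
    _ ≤ X := mul_le_of_le_one_right hX (huv j)

/-- The pairing `⟨x, a + b⟩ + ⟨y, a - b⟩` of finitely supported coefficient families taken along
vector families `v, v'` and `u, u'`. -/
noncomputable def clarksonForm {ι ι' κ κ' : Type*} [Fintype ι] [Fintype ι'] [Fintype κ]
    [Fintype κ'] (u : ι → K) (u' : ι' → K) (v : κ → K) (v' : κ' → K)
    (a : ι → ℂ) (b : ι' → ℂ) (x : κ → ℂ) (y : κ' → ℂ) : ℂ :=
  ∑ k, x k * ⟪v k, ∑ j, a j • u j + ∑ j, b j • u' j⟫_ℂ +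
    ∑ k, y k * ⟪v' k, ∑ j, a j • u j - ∑ j, b j • u' j⟫_ℂ

section Form

variable {ι ι' κ κ' : Type*} [Fintype ι] [Fintype ι'] [Fintype κ] [Fintype κ']
  {u : ι → K} {u' : ι' → K} {v : κ → K} {v' : κ' → K}

theorem norm_clarksonForm_le_sqrt (hu : Orthonormal ℂ u) (hu' : Orthonormal ℂ u')
    (hv : Orthonormal ℂ v) (hv' : Orthonormal ℂ v')
    (a : ι → ℂ) (b : ι' → ℂ) (x : κ → ℂ) (y : κ' → ℂ) :
    ‖clarksonForm u u' v v' a b x y‖ ≤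
      √(2 * (∑ j, ‖a j‖ ^ 2 + ∑ j, ‖b j‖ ^ 2) * (∑ k, ‖x k‖ ^ 2 + ∑ k, ‖y k‖ ^ 2)) := by
  have ha := norm_sum_smul_sq_of_orthonormal hu a
  have hb := norm_sum_smul_sq_of_orthonormal hu' b
  unfold clarksonForm
  set A := ∑ j, a j • u j
  set B := ∑ j, b j • u' j
  have hpar := parallelogram_law_with_norm ℂ A B
  have hx := norm_sum_mul_inner_le_sqrt hv x (A + B)
  have hy := norm_sum_mul_inner_le_sqrt hv' y (A - B)
  have hX : 0 ≤ ∑ k, ‖x k‖ ^ 2 := by positivity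
  have hY : 0 ≤ ∑ k, ‖y k‖ ^ 2 := by positivity
  refine (norm_add_le _ _).trans ((add_le_add hx hy).trans (Real.le_sqrt_of_sq_le ?_))
  rw [← ha, ← hb]
  nlinarith [Real.sq_sqrt hX, Real.sq_sqrt hY,
    sq_nonneg (√(∑ k, ‖x k‖ ^ 2) * ‖A - B‖ - √(∑ k, ‖y k‖ ^ 2) * ‖A + B‖)]

theorem norm_clarksonForm_le_mul
    (h₁ : ∀ j, ∑ k, ‖⟪v k, u j⟫_ℂ‖ ≤ 1) (h₂ : ∀ j, ∑ k, ‖⟪v k, u' j⟫_ℂ‖ ≤ 1)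
    (h₃ : ∀ j, ∑ k, ‖⟪v' k, u j⟫_ℂ‖ ≤ 1) (h₄ : ∀ j, ∑ k, ‖⟪v' k, u' j⟫_ℂ‖ ≤ 1)
    (a : ι → ℂ) (b : ι' → ℂ) (x : κ → ℂ) (y : κ' → ℂ) {X Y : ℝ}
    (hX : 0 ≤ X) (hY : 0 ≤ Y) (hx : ∀ k, ‖x k‖ ≤ X) (hy : ∀ k, ‖y k‖ ≤ Y) :
    ‖clarksonForm u u' v v' a b x y‖ ≤ (∑ j, ‖a j‖ + ∑ j, ‖b j‖) * (X + Y) := by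
  unfold clarksonForm
  simp only [inner_add_right, inner_sub_right, mul_add, mul_sub, Finset.sum_add_distrib,
    Finset.sum_sub_distrib]
  have e₁ := norm_sum_mul_inner_le_mul_sum h₁ a x hX hx
  have e₂ := norm_sum_mul_inner_le_mul_sum h₂ b x hX hx
  have e₃ := norm_sum_mul_inner_le_mul_sum h₃ a y hY hy
  have e₄ := norm_sum_mul_inner_le_mul_sum h₄ b y hY hy
  refine (norm_add_le _ _).trans ((add_le_add (norm_add_le _ _) (norm_sub_le _ _)).trans ?_)
  linarith

end Form

/-- `f` is bounded on the closed strip `0 ≤ re z ≤ 1`. -/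
def BoundedOnStrip (f : ℂ → ℂ) : Prop :=
  ∃ C : ℝ, ∀ z : ℂ, 0 ≤ z.re → z.re ≤ 1 → ‖f z‖ ≤ C

namespace BoundedOnStrip

variable {f g : ℂ → ℂ}

theorem add (hf : BoundedOnStrip f) (hg : BoundedOnStrip g) :
    BoundedOnStrip fun z => f z + g z := by
  obtain ⟨C, hC⟩ := hf
  obtain ⟨D, hD⟩ := hg
  exact ⟨C + D, fun z h₀ h₁ => (norm_add_le _ _).trans (add_le_add (hC z h₀ h₁) (hD z h₀ h₁))⟩

theorem sub (hf : BoundedOnStrip f) (hg : BoundedOnStrip g) :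
    BoundedOnStrip fun z => f z - g z := by
  obtain ⟨C, hC⟩ := hf
  obtain ⟨D, hD⟩ := hg
  exact ⟨C + D, fun z h₀ h₁ => (norm_sub_le _ _).trans (add_le_add (hC z h₀ h₁) (hD z h₀ h₁))⟩

theorem mul (hf : BoundedOnStrip f) (hg : BoundedOnStrip g) :
    BoundedOnStrip fun z => f z * g z := by
  obtain ⟨C, hC⟩ := hf
  obtain ⟨D, hD⟩ := hg
  refine ⟨C * D, fun z h₀ h₁ => ?_⟩
  rw [norm_mul]
  exact mul_le_mul (hC z h₀ h₁) (hD z h₀ h₁) (norm_nonneg _)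
    ((norm_nonneg _).trans (hC z h₀ h₁))

theorem const (c : ℂ) : BoundedOnStrip fun _ => c := ⟨‖c‖, fun _ _ _ => le_rfl⟩

theorem sum {ι : Type*} (s : Finset ι) {f : ι → ℂ → ℂ} (hf : ∀ i, BoundedOnStrip (f i)) :
    BoundedOnStrip fun z => ∑ i ∈ s, f i z := by
  choose C hC using hf
  exact ⟨∑ i ∈ s, C i, fun z h₀ h₁ =>
    (norm_sum_le _ _).trans (Finset.sum_le_sum fun i _ => hC i z h₀ h₁)⟩

theorem exp_affine (α β : ℝ) : BoundedOnStrip fun z => Complex.exp (α + β * z) := by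
  refine ⟨Real.exp (α + |β|), fun z h₀ h₁ => ?_⟩
  rw [Complex.norm_exp]
  simp only [Complex.add_re, Complex.ofReal_re, Complex.mul_re, Complex.ofReal_im, zero_mul,
    sub_zero]
  gcongr
  calc β * z.re ≤ |β| * z.re := by gcongr; exact le_abs_self β
    _ ≤ |β| := mul_le_of_le_one_right (abs_nonneg β) h₁

end BoundedOnStrip

theorem norm_exp_affine (α β : ℝ) (z : ℂ) :
    ‖Complex.exp (α + β * z)‖ = Real.exp (α + β * z.re) := by
  rw [Complex.norm_exp]
  simp

/-- Clarkson's inequality for coefficient families of orthonormal systems whose mutual Gram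
matrices have rows of `ℓ¹`-norm at most `1`. -/
theorem clarkson_of_orthonormal {ι ι' κ κ' : Type*} [Fintype ι] [Fintype ι'] [Fintype κ]
    [Fintype κ'] {u : ι → K} {u' : ι' → K} {v : κ → K} {v' : κ' → K}
    (hu : Orthonormal ℂ u) (hu' : Orthonormal ℂ u')
    (hv : Orthonormal ℂ v) (hv' : Orthonormal ℂ v')
    (h₁ : ∀ j, ∑ k, ‖⟪v k, u j⟫_ℂ‖ ≤ 1) (h₂ : ∀ j, ∑ k, ‖⟪v k, u' j⟫_ℂ‖ ≤ 1)
    (h₃ : ∀ j, ∑ k, ‖⟪v' k, u j⟫_ℂ‖ ≤ 1) (h₄ : ∀ j, ∑ k, ‖⟪v' k, u' j⟫_ℂ‖ ≤ 1)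
    {a : ι → ℝ} {b : ι' → ℝ} {c : κ → ℝ} {d : κ' → ℝ}
    (ha : ∀ j, 0 < a j) (hb : ∀ j, 0 < b j) (hc : ∀ k, 0 < c k) (hd : ∀ k, 0 < d k)
    (hsum : ∀ k, ⟪v k, ∑ j, (a j : ℂ) • u j + ∑ j, (b j : ℂ) • u' j⟫_ℂ = c k)
    (hdiff : ∀ k, ⟪v' k, ∑ j, (a j : ℂ) • u j - ∑ j, (b j : ℂ) • u' j⟫_ℂ = d k)
    {p q : ℝ} (hp1 : 1 < p) (hp2 : p ≤ 2) (hq : q = p / (p - 1)) :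
    ((∑ k, c k ^ p) ^ (q / p) + (∑ k, d k ^ p) ^ (q / p)) ^ (1 / q) ≤
      (2 : ℝ) ^ (1 / q) * (∑ j, a j ^ p + ∑ j, b j ^ p) ^ (1 / p) := by
  have hp0 : 0 < p := by linarith
  have hp1' : 0 < p - 1 := by linarith
  have hq0 : 0 < q := by rw [hq]; positivity
  have hqp : q / p = q - 1 := by rw [hq]; field_simp; ring
  have hq2 : 2 ≤ q := by rw [hq, le_div_iff₀ hp1']; linarith
  have hconj : 1 / p + 1 / q = 1 := by rw [hq]; field_simp; ring
  set σ := ∑ k, c k ^ p with hσ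
  set δ := ∑ k, d k ^ p with hδ
  set P := ∑ j, a j ^ p + ∑ j, b j ^ p with hP
  set m := q / p with hm
  have hm0 : 0 < m := by positivity
  have hσ0 : 0 ≤ σ := Finset.sum_nonneg fun k _ => (Real.rpow_pos_of_pos (hc k) _).le
  have hδ0 : 0 ≤ δ := Finset.sum_nonneg fun k _ => (Real.rpow_pos_of_pos (hd k) _).le
  have hP0 : 0 ≤ P := add_nonneg
    (Finset.sum_nonneg fun k _ => (Real.rpow_pos_of_pos (ha k) _).le)
    (Finset.sum_nonneg fun k _ => (Real.rpow_pos_of_pos (hb k) _).le)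
  have hQσ : 0 ≤ σ ^ m := Real.rpow_nonneg hσ0 _
  have hQδ : 0 ≤ δ ^ m := Real.rpow_nonneg hδ0 _
  set Q := σ ^ m + δ ^ m with hQ
  have hQ0 : 0 ≤ Q := add_nonneg hQσ hQδ
  rcases hQ0.eq_or_lt with hQz | hQpos
  · rw [← hQz, Real.zero_rpow (by positivity)]
    positivity
  -- the analytic families
  let α : ℝ → ℂ → ℂ := fun t z =>
    Complex.exp (((Real.log t * p : ℝ) : ℂ) + ((-(Real.log t * p / 2) : ℝ) : ℂ) * z)
  let ξ : ℝ → ℝ → ℂ → ℂ := fun s t z =>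
    Complex.exp (((Real.log s * m : ℝ) : ℂ) +
      ((Real.log t * p / 2 - Real.log s * (m + 1) / 2 : ℝ) : ℂ) * z)
  have hα_diff : ∀ t, Differentiable ℂ (α t) := fun t => by unfold α; fun_prop
  have hξ_diff : ∀ s t, Differentiable ℂ (ξ s t) := fun s t => by unfold ξ; fun_prop
  have hα_bdd : ∀ t, BoundedOnStrip (α t) := fun t => BoundedOnStrip.exp_affine _ _
  have hξ_bdd : ∀ s t, BoundedOnStrip (ξ s t) := fun s t => BoundedOnStrip.exp_affine _ _
  have hα_norm : ∀ t, 0 < t → ∀ z, ‖α t z‖ = t ^ (p * (1 - z.re / 2)) := fun t ht z => by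
    rw [norm_exp_affine, Real.rpow_def_of_pos ht]; congr 1; ring
  have hξ_norm : ∀ s t, 0 < s → 0 < t → ∀ z,
      ‖ξ s t z‖ = s ^ (m - (m + 1) / 2 * z.re) * t ^ (p / 2 * z.re) := fun s t hs ht z => by
    rw [norm_exp_affine, Real.rpow_def_of_pos ht, Real.rpow_def_of_pos hs, ← Real.exp_add]
    congr 1; ring
  let F : ℂ → ℂ := fun z => clarksonForm u u' v v' (fun j => α (a j) z) (fun j => α (b j) z)
    (fun k => ξ σ (c k) z) (fun k => ξ δ (d k) z)
  have hF_diff : Differentiable ℂ F := by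
    unfold F clarksonForm
    simp only [inner_add_right, inner_sub_right, inner_sum, inner_smul_right]
    fun_prop
  have hF_bdd : BoundedOnStrip F := by
    unfold F clarksonForm
    simp only [inner_add_right, inner_sub_right, inner_sum, inner_smul_right]
    exact .add (.sum _ fun k => (hξ_bdd _ _).mul
        (.add (.sum _ fun j => (hα_bdd _).mul (.const _))
          (.sum _ fun j => (hα_bdd _).mul (.const _))))
      (.sum _ fun k => (hξ_bdd _ _).mul
        (.sub (.sum _ fun j => (hα_bdd _).mul (.const _))
          (.sum _ fun j => (hα_bdd _).mul (.const _))))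
  have hσpos : ∀ k, 0 < σ := fun k =>
    (Real.rpow_pos_of_pos (hc k) p).trans_le (Finset.single_le_sum (f := fun k => c k ^ p)
      (fun i _ => (Real.rpow_pos_of_pos (hc i) p).le) (Finset.mem_univ k))
  have hδpos : ∀ k, 0 < δ := fun k =>
    (Real.rpow_pos_of_pos (hd k) p).trans_le (Finset.single_le_sum (f := fun k => d k ^ p)
      (fun i _ => (Real.rpow_pos_of_pos (hd i) p).le) (Finset.mem_univ k))
  have hm1 : ∀ s : ℝ, 0 ≤ s → s ^ (m - 1) * s = s ^ m := fun s hs => by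
    rcases hs.eq_or_lt with rfl | hs
    · simp [Real.zero_rpow hm0.ne']
    · rw [Real.rpow_sub_one hs.ne', div_mul_cancel₀ _ hs.ne']
  have hleft : ∀ z ∈ Complex.re ⁻¹' {(0 : ℝ)}, ‖F z‖ ≤ P * Q := by
    intro z hz
    have hz : z.re = 0 := hz
    have h := norm_clarksonForm_le_mul h₁ h₂ h₃ h₄ (fun j => α (a j) z) (fun j => α (b j) z)
      (fun k => ξ σ (c k) z) (fun k => ξ δ (d k) z) hQσ hQδ
      (fun k => by rw [hξ_norm _ _ (hσpos k) (hc k), hz]; simp)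
      (fun k => by rw [hξ_norm _ _ (hδpos k) (hd k), hz]; simp)
    refine h.trans_eq ?_
    simp only [hα_norm _ (ha _), hα_norm _ (hb _), hz]
    simp [hP, hQ]
  have hright : ∀ z ∈ Complex.re ⁻¹' {(1 : ℝ)}, ‖F z‖ ≤ √(2 * P * Q) := by
    intro z hz
    have hz : z.re = 1 := hz
    refine (norm_clarksonForm_le_sqrt hu hu' hv hv' _ _ _ _).trans_eq ?_
    have hα2 : ∀ t, 0 < t → ‖α t z‖ ^ 2 = t ^ p := fun t ht => by
      rw [hα_norm t ht, hz, ← Real.rpow_mul_natCast ht.le]; congr 1; push_cast; ring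
    have hξ2 : ∀ s t, 0 < s → 0 < t → ‖ξ s t z‖ ^ 2 = s ^ (m - 1) * t ^ p :=
      fun s t hs ht => by
      rw [hξ_norm s t hs ht, hz, mul_pow, ← Real.rpow_mul_natCast ht.le,
        ← Real.rpow_mul_natCast hs.le]
      congr 2 <;> push_cast <;> ring
    simp only [hα2 _ (ha _), hα2 _ (hb _)]
    rw [Finset.sum_congr rfl fun k _ => hξ2 σ (c k) (hσpos k) (hc k),
      Finset.sum_congr rfl fun k _ => hξ2 δ (d k) (hδpos k) (hd k),
      ← Finset.mul_sum, ← Finset.mul_sum, hm1 σ hσ0, hm1 δ hδ0]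
  set θ : ℝ := 2 / q with hθ
  have hα_mid : ∀ t, 0 < t → α t θ = t := fun t ht => by
    have h : (((Real.log t * p : ℝ) : ℂ) + ((-(Real.log t * p / 2) : ℝ) : ℂ) * θ) =
        (Real.log t : ℝ) := by
      norm_cast
      rw [hθ, hq]; field_simp; ring
    simp only [α, h]
    rw [← Complex.ofReal_exp, Real.exp_log ht]
  have hξ_mid : ∀ s t, 0 < s → 0 < t → ξ s t θ * t = ((s ^ (m - 1) * t ^ p : ℝ) : ℂ) :=
    fun s t hs ht => by
    have h : (((Real.log s * m : ℝ) : ℂ) +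
        ((Real.log t * p / 2 - Real.log s * (m + 1) / 2 : ℝ) : ℂ) * θ) =
        ((Real.log s * (m - 1) + Real.log t * (p - 1) : ℝ) : ℂ) := by
      norm_cast
      rw [hqp, hθ, hq]; field_simp; ring
    simp only [ξ, h]
    rw [← Complex.ofReal_exp, Real.exp_add, ← Real.rpow_def_of_pos hs, ← Real.rpow_def_of_pos ht,
      ← Complex.ofReal_mul, mul_assoc, Real.rpow_sub_one ht.ne', div_mul_cancel₀ _ ht.ne']
  have hmid : F θ = Q := by
    simp only [F, clarksonForm, hα_mid _ (ha _), hα_mid _ (hb _), hsum, hdiff]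
    rw [Finset.sum_congr rfl fun k _ => hξ_mid σ (c k) (hσpos k) (hc k),
      Finset.sum_congr rfl fun k _ => hξ_mid δ (d k) (hδpos k) (hd k),
      ← Complex.ofReal_sum, ← Complex.ofReal_sum, ← Finset.mul_sum, ← Finset.mul_sum,
      hm1 σ hσ0, hm1 δ hδ0, ← Complex.ofReal_add]
  have hθ0 : 0 ≤ θ := by positivity
  have hθ1 : θ ≤ 1 := by rw [hθ, div_le_one hq0]; exact hq2
  have hthree := Complex.HadamardThreeLines.norm_le_interp_of_mem_verticalClosedStrip'
    (f := F) (z := (θ : ℂ)) zero_lt_one ⟨by simpa using hθ0, by simpa using hθ1⟩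
    hF_diff.diffContOnCl (by
      obtain ⟨C, hC⟩ := hF_bdd
      refine ⟨C, ?_⟩
      rintro _ ⟨z, hz, rfl⟩
      exact hC z hz.1 hz.2) hleft hright
  rw [hmid, Complex.norm_of_nonneg hQ0] at hthree
  simp only [Complex.ofReal_re, sub_zero, div_one] at hthree
  have hθpos : 0 < θ := by positivity
  rcases hP0.eq_or_lt with hPz | hPpos
  · rw [← hPz] at hthree
    simp only [mul_zero, zero_mul, Real.sqrt_zero, Real.zero_rpow hθpos.ne'] at hthree
    linarith
  have hexp : (P * Q) ^ (1 - θ) * √(2 * P * Q) ^ θ =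
      (2 ^ (1 / q) * P ^ (1 / p)) * Q ^ (1 / p) := by
    have hθq : 1 / 2 * θ = 1 / q := by rw [hθ]; field_simp
    have hθp : 1 / p = (1 - θ) + 1 / q := by rw [← hθq]; linarith
    rw [Real.sqrt_eq_rpow, ← Real.rpow_mul (by positivity), hθq, hθp,
      Real.rpow_add hPpos, Real.rpow_add hQpos, Real.mul_rpow hP0 hQ0,
      Real.mul_rpow (by positivity) hQ0, Real.mul_rpow zero_le_two hP0]
    ring
  have hQsplit : Q = Q ^ (1 / q) * Q ^ (1 / p) := by
    rw [← Real.rpow_add hQpos, add_comm, hconj, Real.rpow_one]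
  rw [hexp] at hthree
  have hQp : 0 < Q ^ (1 / p) := Real.rpow_pos_of_pos hQpos _
  exact le_of_mul_le_mul_right (hQsplit ▸ hthree) hQp

end Interpolation

section Operators

variable {H : Type} [NormedAddCommGroup H] [InnerProductSpace ℂ H]

/-- `T = ∑ j, a j ⟨h j, ·⟩ g j` is a singular value decomposition of the finite-rank operator `T`
with positive singular values in decreasing order. -/
structure IsSVD (T : H →L[ℂ] H) {r : ℕ} (a : Fin r → ℝ) (g h : Fin r → H) : Prop where
  antitone : Antitone a
  pos : ∀ j, 0 < a j
  left : Orthonormal ℂ g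
  right : Orthonormal ℂ h
  apply_eq : ∀ x, T x = ∑ j, ((a j : ℂ) * ⟪h j, x⟫_ℂ) • g j

theorem bddBelow_sValue_set (T : H →L[ℂ] H) (n : ℕ) :
    BddBelow {c : ℝ | ∃ F : H →L[ℂ] H,
      Module.rank ℂ (LinearMap.range F.toLinearMap) ≤ (n : Cardinal) ∧ c = ‖T - F‖} :=
  ⟨0, by rintro _ ⟨F, -, rfl⟩; exact norm_nonneg _⟩

theorem sValue_le_norm_sub {T F : H →L[ℂ] H} {n : ℕ}
    (hF : Module.rank ℂ (LinearMap.range F.toLinearMap) ≤ (n : Cardinal)) :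
    sValue T n ≤ ‖T - F‖ :=
  csInf_le (bddBelow_sValue_set T n) ⟨F, hF, rfl⟩

theorem le_sValue {T : H →L[ℂ] H} {n : ℕ} {c : ℝ}
    (h : ∀ F : H →L[ℂ] H, Module.rank ℂ (LinearMap.range F.toLinearMap) ≤ (n : Cardinal) →
      c ≤ ‖T - F‖) : c ≤ sValue T n := by
  refine le_csInf ⟨_, 0, ?_, rfl⟩ ?_
  · simp
  · rintro _ ⟨F, hF, rfl⟩
    exact h F hF

theorem sValue_nonneg (T : H →L[ℂ] H) (n : ℕ) : 0 ≤ sValue T n :=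
  le_sValue fun _ _ => norm_nonneg _

theorem sValue_le_add_norm_sub (S T : H →L[ℂ] H) (n : ℕ) :
    sValue S n ≤ sValue T n + ‖S - T‖ := by
  rw [← sub_le_iff_le_add]
  refine le_sValue fun F hF => ?_
  have h := norm_add_le (S - T) (T - F)
  rw [sub_add_sub_cancel] at h
  linarith [sValue_le_norm_sub (T := S) hF]

theorem abs_sValue_sub_le (S T : H →L[ℂ] H) (n : ℕ) :
    |sValue S n - sValue T n| ≤ ‖S - T‖ := by
  have h := sValue_le_add_norm_sub T S n
  rw [norm_sub_rev] at h
  rw [abs_le]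
  constructor <;> linarith [sValue_le_add_norm_sub S T n]

theorem sValue_comp_le {P : H →L[ℂ] H} (hP : ‖P‖ ≤ 1) (T : H →L[ℂ] H) (n : ℕ) :
    sValue (P ∘L T) n ≤ sValue T n := by
  refine le_sValue fun F hF => ?_
  have hrank : Module.rank ℂ (LinearMap.range (P ∘L F).toLinearMap) ≤ (n : Cardinal) :=
    (LinearMap.rank_comp_le_right F.toLinearMap P.toLinearMap).trans hF
  refine (sValue_le_norm_sub hrank).trans ?_
  rw [← ContinuousLinearMap.comp_sub]
  exact (ContinuousLinearMap.opNorm_comp_le _ _).trans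
    (mul_le_of_le_one_left (norm_nonneg _) hP)

namespace IsSVD

variable {T : H →L[ℂ] H} {r : ℕ} {a : Fin r → ℝ} {g h : Fin r → H}

theorem apply_right (hT : IsSVD T a g h) (i : Fin r) : T (h i) = (a i : ℂ) • g i := by
  rw [hT.apply_eq, Finset.sum_eq_single i]
  · rw [orthonormal_iff_ite.mp hT.right]; simp
  · intro j _ hj
    rw [orthonormal_iff_ite.mp hT.right, if_neg hj]; simp
  · simp

theorem inner_left_apply (hT : IsSVD T a g h) (i : Fin r) : ⟪g i, T (h i)⟫_ℂ = a i := by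
  rw [hT.apply_right, inner_smul_right, orthonormal_iff_ite.mp hT.left]
  simp

theorem sValue_le (hT : IsSVD T a g h) (n : ℕ) {M : ℝ} (hM : 0 ≤ M)
    (haM : ∀ j : Fin r, n ≤ j → a j ≤ M) : sValue T n ≤ M := by
  classical
  let s : Finset (Fin r) := Finset.univ.filter fun j => (j : ℕ) < n
  let F : H →L[ℂ] H := ∑ j ∈ s, (a j : ℂ) • (innerSL ℂ (h j)).smulRight (g j)
  have hFx : ∀ x, F x = ∑ j ∈ s, ((a j : ℂ) * ⟪h j, x⟫_ℂ) • g j := fun x => by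
    simp only [F, sum_apply, smul_apply, ContinuousLinearMap.smulRight_apply, smul_smul]
    rfl
  have hcard : s.card ≤ n := by
    have := Finset.card_le_card_of_injOn (s := s) (t := Finset.range n) (fun j => (j : ℕ))
      (fun j hj => by simpa [s] using hj) (fun i _ j _ hij => Fin.ext hij)
    simpa using this
  have hrank : Module.rank ℂ (LinearMap.range F.toLinearMap) ≤ (n : Cardinal) := by
    have hle : LinearMap.range F.toLinearMap ≤
        Submodule.span ℂ ((s.image g : Finset H) : Set H) := by
      rintro _ ⟨x, rfl⟩
      change F x ∈ _
      rw [hFx]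
      exact Submodule.sum_mem _ fun j hj => Submodule.smul_mem _ _
        (Submodule.subset_span (by simpa using ⟨j, hj, rfl⟩))
    refine (Submodule.rank_mono hle).trans ((rank_span_finset_le _).trans ?_)
    exact_mod_cast Finset.card_image_le.trans hcard
  refine (sValue_le_norm_sub hrank).trans (ContinuousLinearMap.opNorm_le_bound _ hM fun x => ?_)
  have hsub : (T - F) x = ∑ j, (if j ∈ s then 0 else (a j : ℂ) * ⟪h j, x⟫_ℂ) • g j := by
    rw [sub_apply, hT.apply_eq, hFx, sub_eq_iff_eq_add,
      ← Finset.sum_filter_add_sum_filter_not Finset.univ (fun j => j ∈ s)]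
    simp only [ite_smul, zero_smul, Finset.sum_ite, Finset.sum_const_zero, zero_add]
    rw [add_comm]
    simp
  refine le_of_sq_le_sq ?_ (by positivity)
  rw [hsub, norm_sum_smul_sq_of_orthonormal hT.left, mul_pow]
  calc _ ≤ ∑ j, M ^ 2 * ‖⟪h j, x⟫_ℂ‖ ^ 2 := Finset.sum_le_sum fun j _ => ?_
    _ = M ^ 2 * ∑ j, ‖⟪h j, x⟫_ℂ‖ ^ 2 := by rw [Finset.mul_sum]
    _ ≤ _ := by gcongr; exact hT.right.sum_inner_products_le x
  split_ifs with hj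
  · simp; positivity
  · rw [norm_mul, mul_pow, Complex.norm_of_nonneg (hT.pos j).le]
    have := haM j (by simpa [s] using hj)
    have := (hT.pos j).le
    gcongr

theorem le_sValue (hT : IsSVD T a g h) (i : Fin r) : a i ≤ sValue T i := by
  refine _root_.le_sValue fun F hF => ?_
  have hlt : (i : ℕ) + 1 ≤ r := i.2
  let ι : Fin ((i : ℕ) + 1) → Fin r := Fin.castLE hlt
  have hι : Function.Injective ι := Fin.castLE_injective hlt
  have : FiniteDimensional ℂ (LinearMap.range F.toLinearMap) :=
    Module.rank_lt_aleph0_iff.mp (hF.trans_lt Cardinal.natCast_lt_aleph0)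
  have hfin : Module.finrank ℂ (LinearMap.range F.toLinearMap) ≤ i :=
    Module.finrank_le_of_rank_le hF
  let L : (Fin ((i : ℕ) + 1) → ℂ) →ₗ[ℂ] H := Fintype.linearCombination ℂ (h ∘ ι)
  have hLx : ∀ t, L t = ∑ j, t j • h (ι j) := fun t => by
    simp [L, Fintype.linearCombination_apply]
  have hker := LinearMap.ker_ne_bot_of_finrank_lt (f := F.toLinearMap.rangeRestrict ∘ₗ L)
    (by simpa using Nat.lt_succ_of_le hfin)
  obtain ⟨t, ht, ht0⟩ := (Submodule.ne_bot_iff _).mp hker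
  have hFt : F (L t) = 0 := congrArg Subtype.val (LinearMap.mem_ker.mp ht)
  have hL : ‖L t‖ ^ 2 = ∑ j, ‖t j‖ ^ 2 := by
    rw [hLx]
    exact norm_sum_smul_sq_of_orthonormal (hT.right.comp ι hι) t
  have hTL : ‖T (L t)‖ ^ 2 = ∑ j, ‖t j * a (ι j)‖ ^ 2 := by
    rw [hLx, map_sum]
    simp only [map_smul, hT.apply_right, smul_smul]
    exact norm_sum_smul_sq_of_orthonormal (hT.left.comp ι hι) _
  have hpos : 0 < ‖L t‖ := by
    refine (norm_nonneg _).lt_of_ne' fun h0 => ht0 ?_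
    rw [h0, zero_pow two_ne_zero, eq_comm,
      Finset.sum_eq_zero_iff_of_nonneg fun _ _ => by positivity] at hL
    ext j
    simpa using hL j (Finset.mem_univ j)
  have hlow : a i * ‖L t‖ ≤ ‖T (L t)‖ := by
    refine le_of_sq_le_sq ?_ (norm_nonneg _)
    rw [mul_pow, hL, hTL, Finset.mul_sum]
    refine Finset.sum_le_sum fun j _ => ?_
    rw [norm_mul, mul_pow, mul_comm, Complex.norm_of_nonneg (hT.pos _).le]
    have : a i ≤ a (ι j) := hT.antitone (Fin.le_def.mpr (Nat.lt_succ_iff.mp j.2))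
    have := (hT.pos i).le
    gcongr
  refine le_of_mul_le_mul_right (hlow.trans ?_) hpos
  have h := (T - F).le_opNorm (L t)
  rwa [sub_apply, hFt, sub_zero] at h

theorem sum_rpow_le_tsum (hT : IsSVD T a g h) {p : ℝ} (hp : 0 < p) {s : ℕ → ℝ}
    (hs : ∀ n, sValue T n ≤ s n) (hsum : Summable fun n => s n ^ p) :
    ∑ j, a j ^ p ≤ ∑' n, s n ^ p := by
  have hs0 : ∀ n, 0 ≤ s n := fun n => (sValue_nonneg T n).trans (hs n)
  calc ∑ j, a j ^ p ≤ ∑ j : Fin r, s j ^ p := Finset.sum_le_sum fun j _ =>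
        Real.rpow_le_rpow (hT.pos j).le ((hT.le_sValue j).trans (hs j)) hp.le
    _ = ∑ n ∈ Finset.range r, s n ^ p := Fin.sum_univ_eq_sum_range (fun n => s n ^ p) r
    _ ≤ _ := hsum.sum_le_tsum _ fun n _ => Real.rpow_nonneg (hs0 n) _

theorem sum_range_sValue_rpow_le (hT : IsSVD T a g h) {p : ℝ} (hp : 0 < p) (N : ℕ) :
    ∑ n ∈ Finset.range N, sValue T n ^ p ≤ ∑ j, a j ^ p := by
  have hzero : ∀ n, r ≤ n → sValue T n ^ p = 0 := fun n hn => by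
    have : sValue T n = 0 := le_antisymm
      (hT.sValue_le n le_rfl fun j hj => absurd j.2 (by omega)) (sValue_nonneg T n)
    rw [this, Real.zero_rpow hp.ne']
  calc ∑ n ∈ Finset.range N, sValue T n ^ p
      ≤ ∑ n ∈ Finset.range (max N r), sValue T n ^ p :=
        Finset.sum_le_sum_of_subset_of_nonneg (by simp)
          fun n _ _ => Real.rpow_nonneg (sValue_nonneg T n) _
    _ = ∑ n ∈ Finset.range r, sValue T n ^ p :=
        (Finset.sum_subset (by simp) fun n _ hn => hzero n (by simpa using hn)).symm
    _ = ∑ j : Fin r, sValue T j ^ p := (Fin.sum_univ_eq_sum_range (fun n => sValue T n ^ p) r).symm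
    _ ≤ _ := Finset.sum_le_sum fun j _ => Real.rpow_le_rpow (sValue_nonneg T j)
        (hT.sValue_le j (hT.pos j).le fun i hi => hT.antitone (Fin.le_def.mpr hi)) hp.le

end IsSVD

theorem MemSp.exists_finiteRank_approx {p : ℝ} (hp : 0 < p) {T : H →L[ℂ] H} (hT : MemSp p T)
    {ε : ℝ} (hε : 0 < ε) :
    ∃ A : H →L[ℂ] H, FiniteDimensional ℂ (LinearMap.range A.toLinearMap) ∧ ‖T - A‖ ≤ ε ∧
      ∀ n, sValue A n ≤ sValue T n := by
  obtain ⟨n, hn⟩ : ∃ n, sValue T n < ε := by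
    obtain ⟨n, hn⟩ := (hT.2.tendsto_atTop_zero.eventually
      (gt_mem_nhds (Real.rpow_pos_of_pos hε p))).exists
    exact ⟨n, (Real.rpow_lt_rpow_iff (sValue_nonneg T n) hε.le hp).mp hn⟩
  obtain ⟨F, hF, hlt⟩ : ∃ F : H →L[ℂ] H,
      Module.rank ℂ (LinearMap.range F.toLinearMap) ≤ (n : Cardinal) ∧ ‖T - F‖ < ε := by
    by_contra! h
    exact hn.not_ge (le_sValue h)
  set W := LinearMap.range F.toLinearMap with hW
  have : FiniteDimensional ℂ W :=
    Module.rank_lt_aleph0_iff.mp (hF.trans_lt Cardinal.natCast_lt_aleph0)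
  refine ⟨W.starProjection ∘L T, ?_, ?_, sValue_comp_le W.starProjection_norm_le T⟩
  · refine Submodule.finiteDimensional_of_le (S₂ := W) ?_
    rintro _ ⟨x, rfl⟩
    exact W.starProjection_apply_mem (T x)
  · refine ContinuousLinearMap.opNorm_le_bound _ hε.le fun x => ?_
    have hFx : W.starProjection (F x) = F x :=
      Submodule.starProjection_eq_self_iff.mpr ⟨x, rfl⟩
    have h1 : (T - W.starProjection ∘L T) x = Wᗮ.starProjection ((T - F) x) := by
      rw [Submodule.starProjection_orthogonal_val]
      simp [hFx]
    rw [h1]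
    refine (Wᗮ.norm_starProjection_apply_le _).trans (((T - F).le_opNorm x).trans ?_)
    gcongr

theorem tendsto_sum_range_sValue_rpow {T : H →L[ℂ] H} {S : ℕ → H →L[ℂ] H}
    (h : Tendsto S atTop (𝓝 T)) {p : ℝ} (hp : 0 ≤ p) (N : ℕ) :
    Tendsto (fun i => ∑ n ∈ Finset.range N, sValue (S i) n ^ p) atTop
      (𝓝 (∑ n ∈ Finset.range N, sValue T n ^ p)) := by
  refine tendsto_finsetSum _ fun n _ => Tendsto.rpow_const ?_ (Or.inr hp)
  rw [tendsto_iff_norm_sub_tendsto_zero] at h ⊢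
  exact squeeze_zero (fun _ => norm_nonneg _) (fun i => abs_sValue_sub_le (S i) T n) h

theorem sum_norm_inner_mul_inner_le_one {κ : Type*} [Fintype κ] {f e : κ → H}
    (hf : Orthonormal ℂ f) (he : Orthonormal ℂ e) {g h : H} (hg : ‖g‖ = 1) (hh : ‖h‖ = 1) :
    ∑ k, ‖⟪f k, g⟫_ℂ * ⟪h, e k⟫_ℂ‖ ≤ 1 := by
  have h1 := hf.sum_inner_products_le g (s := Finset.univ)
  have h2 := he.sum_inner_products_le h (s := Finset.univ)
  rw [hg] at h1
  rw [hh] at h2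
  calc ∑ k, ‖⟪f k, g⟫_ℂ * ⟪h, e k⟫_ℂ‖
      ≤ ∑ k, (‖⟪f k, g⟫_ℂ‖ ^ 2 + ‖⟪e k, h⟫_ℂ‖ ^ 2) / 2 := Finset.sum_le_sum fun k _ => by
        rw [norm_mul, norm_inner_symm h]
        linarith [two_mul_le_add_sq ‖⟪f k, g⟫_ℂ‖ ‖⟪e k, h⟫_ℂ‖]
    _ = (∑ k, ‖⟪f k, g⟫_ℂ‖ ^ 2 + ∑ k, ‖⟪e k, h⟫_ℂ‖ ^ 2) / 2 := by
        rw [← Finset.sum_div, Finset.sum_add_distrib]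
    _ ≤ 1 := by linarith

variable [CompleteSpace H]

theorem exists_isSVD (T : H →L[ℂ] H) [FiniteDimensional ℂ (LinearMap.range T.toLinearMap)] :
    ∃ (r : ℕ) (a : Fin r → ℝ) (g h : Fin r → H), IsSVD T a g h := by
  set W := LinearMap.range T.toLinearMap with hW
  let G : W →ₗ[ℂ] W := (T.toLinearMap.rangeRestrict) ∘ₗ
    (ContinuousLinearMap.adjoint T).toLinearMap ∘ₗ W.subtype
  have hGinner : ∀ v w : W, ⟪v, G w⟫_ℂ =
      ⟪ContinuousLinearMap.adjoint T v, ContinuousLinearMap.adjoint T w⟫_ℂ := fun v w => by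
    rw [ContinuousLinearMap.adjoint_inner_left]; rfl
  have hG : G.IsSymmetric := fun v w => by
    rw [hGinner, ← inner_conj_symm, hGinner, inner_conj_symm]
  let e := hG.eigenvectorBasis rfl
  let l := hG.eigenvalues rfl
  have hTe : ∀ i j, ⟪ContinuousLinearMap.adjoint T (e i), ContinuousLinearMap.adjoint T (e j)⟫_ℂ =
      if i = j then (l j : ℂ) else 0 := fun i j => by
    rw [← hGinner, hG.apply_eigenvectorBasis, inner_smul_right,
      orthonormal_iff_ite.mp e.orthonormal i j]
    simp [l]
  have hlpos : ∀ j, 0 < l j := fun j => by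
    have hnorm : ‖ContinuousLinearMap.adjoint T (e j)‖ ^ 2 = l j := by
      have h := hTe j j
      rw [inner_self_eq_norm_sq_to_K, if_pos rfl] at h
      rw [← Complex.ofReal_inj, ← h]
      push_cast
      rfl
    rw [← hnorm]
    refine pow_pos (norm_pos_iff.mpr fun h0 => ?_) 2
    obtain ⟨x, hx⟩ := (e j).2
    have h1 : ⟪(e j : H), (e j : H)⟫_ℂ = 0 := by
      nth_rw 2 [← hx]
      change ⟪(e j : H), T x⟫_ℂ = 0
      rw [← ContinuousLinearMap.adjoint_inner_left, h0, inner_zero_left]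
    have h2 := e.orthonormal.ne_zero j
    exact h2 (by simpa using h1)
  have hsqrt : ∀ j, 0 < √(l j) := fun j => Real.sqrt_pos.mpr (hlpos j)
  refine ⟨_, fun j => √(l j), fun j => (e j : H),
    fun j => ((√(l j) : ℂ)⁻¹) • ContinuousLinearMap.adjoint T (e j), ?_, hsqrt, ?_, ?_, ?_⟩
  · exact fun i j hij => Real.sqrt_le_sqrt (hG.eigenvalues_antitone rfl hij)
  · exact e.orthonormal.comp_linearIsometry W.subtypeₗᵢ
  · rw [orthonormal_iff_ite]
    intro i j
    rw [inner_smul_left, inner_smul_right, hTe]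
    split_ifs with hij
    · subst hij
      have h2 : (l i : ℂ) = (√(l i) : ℂ) * (√(l i) : ℂ) := by
        rw [← Complex.ofReal_mul, Real.mul_self_sqrt (hlpos i).le]
      have h3 : (√(l i) : ℂ) ≠ 0 := by exact_mod_cast (hsqrt i).ne'
      rw [h2, map_inv₀, Complex.conj_ofReal]
      field_simp
    · simp
  · intro x
    have h := congrArg (Subtype.val) (e.sum_repr' (T.toLinearMap.rangeRestrict x))
    have h' : T x = ((T.toLinearMap.rangeRestrict x : W) : H) := rfl
    rw [h', ← h, Submodule.coe_sum]
    refine Finset.sum_congr rfl fun j _ => ?_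
    rw [Submodule.coe_smul]
    congr 1
    have h3 : (√(l j) : ℂ) ≠ 0 := by exact_mod_cast (hsqrt j).ne'
    rw [inner_smul_left, map_inv₀, Complex.conj_ofReal, mul_inv_cancel_left₀ h3,
      ContinuousLinearMap.adjoint_inner_left]
    rfl

open TensorProduct in
/-- A Hilbert–Schmidt model of the rank-one operators `g ⊗ h̄` on `H`. -/
theorem exists_rankOne_pairing (H : Type) [NormedAddCommGroup H] [InnerProductSpace ℂ H]
    [CompleteSpace H] :
    ∃ (K : Type) (_ : NormedAddCommGroup K) (_ : InnerProductSpace ℂ K) (φ : H → H → K),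
      ∀ f e g h, ⟪φ f e, φ g h⟫_ℂ = ⟪f, g⟫_ℂ * ⟪h, e⟫_ℂ := by
  obtain ⟨w, b, -⟩ := exists_hilbertBasis ℂ H
  have hstar : ∀ x y, ⟪star (b.repr x), star (b.repr y)⟫_ℂ = ⟪y, x⟫_ℂ := fun x y => by
    rw [← b.repr.inner_map_map y x, lp.inner_eq_tsum, lp.inner_eq_tsum]
    refine tsum_congr fun i => ?_
    simp [mul_comm]
  refine ⟨H ⊗[ℂ] lp (fun _ : w => ℂ) 2, inferInstance, inferInstance,
    fun g h => g ⊗ₜ[ℂ] star (b.repr h), fun f e g h => ?_⟩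
  rw [TensorProduct.inner_tmul, hstar]

/-- Clarkson's inequality for the singular values of finite-rank operators. -/
theorem IsSVD.clarkson {A B : H →L[ℂ] H} {r₁ r₂ r₃ r₄ : ℕ}
    {a : Fin r₁ → ℝ} {g₁ h₁ : Fin r₁ → H} {b : Fin r₂ → ℝ} {g₂ h₂ : Fin r₂ → H}
    {c : Fin r₃ → ℝ} {g₃ h₃ : Fin r₃ → H} {d : Fin r₄ → ℝ} {g₄ h₄ : Fin r₄ → H}
    (hA : IsSVD A a g₁ h₁) (hB : IsSVD B b g₂ h₂)
    (hS : IsSVD (A + B) c g₃ h₃) (hD : IsSVD (A - B) d g₄ h₄)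
    {p q : ℝ} (hp1 : 1 < p) (hp2 : p ≤ 2) (hq : q = p / (p - 1)) :
    ((∑ k, c k ^ p) ^ (q / p) + (∑ k, d k ^ p) ^ (q / p)) ^ (1 / q) ≤
      (2 : ℝ) ^ (1 / q) * (∑ j, a j ^ p + ∑ j, b j ^ p) ^ (1 / p) := by
  obtain ⟨K, _, _, φ, hφ⟩ := exists_rankOne_pairing H
  have horth : ∀ {r : ℕ} {g h : Fin r → H}, Orthonormal ℂ g → Orthonormal ℂ h →
      Orthonormal ℂ fun j => φ (g j) (h j) := fun {r g h} hg hh => by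
    rw [orthonormal_iff_ite] at hg hh ⊢
    intro i j
    rw [hφ, hg, hh]
    by_cases hij : i = j
    · simp [hij]
    · simp [hij]
  have hrow : ∀ {r r' : ℕ} {g h : Fin r → H} {f e : Fin r' → H}, Orthonormal ℂ g →
      Orthonormal ℂ h → Orthonormal ℂ f → Orthonormal ℂ e →
      ∀ j, ∑ k, ‖⟪φ (f k) (e k), φ (g j) (h j)⟫_ℂ‖ ≤ 1 := fun hg hh hf he j => by
    simp only [hφ]
    exact sum_norm_inner_mul_inner_le_one hf he (hg.1 j) (hh.1 j)
  have hpair : ∀ {T : H →L[ℂ] H} {r : ℕ} {s : Fin r → ℝ} {g h : Fin r → H}, IsSVD T s g h →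
      ∀ f e, ⟪φ f e, ∑ j, (s j : ℂ) • φ (g j) (h j)⟫_ℂ = ⟪f, T e⟫_ℂ := fun hT f e => by
    rw [hT.apply_eq, inner_sum, inner_sum]
    refine Finset.sum_congr rfl fun j _ => ?_
    rw [inner_smul_right, inner_smul_right, hφ]
    ring
  refine clarkson_of_orthonormal (horth hA.left hA.right) (horth hB.left hB.right)
    (horth hS.left hS.right) (horth hD.left hD.right)
    (hrow hA.left hA.right hS.left hS.right) (hrow hB.left hB.right hS.left hS.right)
    (hrow hA.left hA.right hD.left hD.right) (hrow hB.left hB.right hD.left hD.right)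
    hA.pos hB.pos hS.pos hD.pos (fun k => ?_) (fun k => ?_) hp1 hp2 hq
  · rw [inner_add_right, hpair hA, hpair hB, ← inner_add_right, ← add_apply, hS.inner_left_apply]
  · rw [inner_sub_right, hpair hA, hpair hB, ← inner_sub_right, ← sub_apply, hD.inner_left_apply]

theorem clarkson_range_of_finiteRank {A B : H →L[ℂ] H}
    [FiniteDimensional ℂ (LinearMap.range A.toLinearMap)]
    [FiniteDimensional ℂ (LinearMap.range B.toLinearMap)]
    {p q : ℝ} (hp1 : 1 < p) (hp2 : p ≤ 2) (hq : q = p / (p - 1)) {s t : ℕ → ℝ}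
    (hs : ∀ n, sValue A n ≤ s n) (ht : ∀ n, sValue B n ≤ t n)
    (hs' : Summable fun n => s n ^ p) (ht' : Summable fun n => t n ^ p) (N : ℕ) :
    ((∑ n ∈ Finset.range N, sValue (A + B) n ^ p) ^ (q / p) +
        (∑ n ∈ Finset.range N, sValue (A - B) n ^ p) ^ (q / p)) ^ (1 / q) ≤
      (2 : ℝ) ^ (1 / q) * (∑' n, s n ^ p + ∑' n, t n ^ p) ^ (1 / p) := by
  have hp0 : 0 < p := by linarith
  have hq0 : 0 < q := by rw [hq]; exact div_pos hp0 (by linarith)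
  have : FiniteDimensional ℂ (LinearMap.range (A + B).toLinearMap) :=
    Submodule.finiteDimensional_of_le (LinearMap.range_add_le A.toLinearMap B.toLinearMap)
  have : FiniteDimensional ℂ (LinearMap.range (A - B).toLinearMap) := by
    refine Submodule.finiteDimensional_of_le
      (S₂ := LinearMap.range A.toLinearMap ⊔ LinearMap.range B.toLinearMap) ?_
    rintro _ ⟨x, rfl⟩
    exact Submodule.sub_mem _ (Submodule.mem_sup_left ⟨x, rfl⟩) (Submodule.mem_sup_right ⟨x, rfl⟩)
  obtain ⟨_, _, _, _, hA⟩ := exists_isSVD A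
  obtain ⟨_, _, _, _, hB⟩ := exists_isSVD B
  obtain ⟨_, _, _, _, hS⟩ := exists_isSVD (A + B)
  obtain ⟨_, _, _, _, hD⟩ := exists_isSVD (A - B)
  have hnonneg : ∀ T : H →L[ℂ] H, 0 ≤ ∑ n ∈ Finset.range N, sValue T n ^ p := fun T =>
    Finset.sum_nonneg fun n _ => Real.rpow_nonneg (sValue_nonneg T n) _
  refine le_trans ?_ ((hA.clarkson hB hS hD hp1 hp2 hq).trans ?_)
  · have hS' := hS.sum_range_sValue_rpow_le hp0 N
    have hD' := hD.sum_range_sValue_rpow_le hp0 N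
    have := hnonneg (A + B)
    have := hnonneg (A - B)
    gcongr
  · have hA' := hA.sum_rpow_le_tsum hp0 hs hs'
    have hB' := hB.sum_rpow_le_tsum hp0 ht ht'
    have hA₀ := Finset.sum_nonneg fun j (_ : j ∈ Finset.univ) =>
      Real.rpow_nonneg (hA.pos j).le p
    have hB₀ := Finset.sum_nonneg fun j (_ : j ∈ Finset.univ) =>
      Real.rpow_nonneg (hB.pos j).le p
    gcongr

theorem MemSp.clarkson_range {p q : ℝ} (hp1 : 1 < p) (hp2 : p ≤ 2) (hq : q = p / (p - 1))
    {T₁ T₂ : H →L[ℂ] H} (hT₁ : MemSp p T₁) (hT₂ : MemSp p T₂) (N : ℕ) :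
    ((∑ n ∈ Finset.range N, sValue (T₁ + T₂) n ^ p) ^ (q / p) +
        (∑ n ∈ Finset.range N, sValue (T₁ - T₂) n ^ p) ^ (q / p)) ^ (1 / q) ≤
      (2 : ℝ) ^ (1 / q) * (∑' n, sValue T₁ n ^ p + ∑' n, sValue T₂ n ^ p) ^ (1 / p) := by
  have hp0 : 0 < p := by linarith
  have hq0 : 0 < q := by rw [hq]; exact div_pos hp0 (by linarith)
  have happrox : ∀ {T : H →L[ℂ] H}, MemSp p T → ∃ A : ℕ → H →L[ℂ] H,
      (∀ i, FiniteDimensional ℂ (LinearMap.range (A i).toLinearMap)) ∧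
      (∀ i n, sValue (A i) n ≤ sValue T n) ∧ Tendsto A atTop (𝓝 T) := fun {T} hT => by
    choose A hfin hA hs using fun i : ℕ =>
      hT.exists_finiteRank_approx hp0 (Nat.one_div_pos_of_nat (α := ℝ) (n := i))
    refine ⟨A, hfin, hs, tendsto_iff_norm_sub_tendsto_zero.mpr ?_⟩
    exact squeeze_zero (fun _ => norm_nonneg _)
      (fun i => (norm_sub_rev _ _).trans_le (hA i)) tendsto_one_div_add_atTop_nhds_zero_nat
  obtain ⟨A, hAfin, hAs, hA⟩ := happrox hT₁
  obtain ⟨B, hBfin, hBs, hB⟩ := happrox hT₂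
  have hS := tendsto_sum_range_sValue_rpow (hA.add hB) hp0.le N
  have hD := tendsto_sum_range_sValue_rpow (hA.sub hB) hp0.le N
  have hqp : 0 ≤ q / p := by positivity
  refine le_of_tendsto' (((hS.rpow_const (Or.inr hqp)).add
    (hD.rpow_const (Or.inr hqp))).rpow_const (Or.inr (by positivity))) fun i => ?_
  have := hAfin i
  have := hBfin i
  exact clarkson_range_of_finiteRank hp1 hp2 hq (hAs i) (hBs i) hT₁.2 hT₂.2 N

end Operators

/-- Clarkson inequality for Schatten classes, case `1 < p ≤ 2`:
`(‖T₁+T₂‖_p^q + ‖T₁−T₂‖_p^q)^(1/q) ≤ 2^(1/q) (‖T₁‖_p^p + ‖T₂‖_p^p)^(1/p)`. -/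
theorem stmt11 {H : Type} [NormedAddCommGroup H] [InnerProductSpace ℂ H]
    [CompleteSpace H] [TopologicalSpace.SeparableSpace H]
    (p q : ℝ) (hp1 : 1 < p) (hp2 : p ≤ 2) (hq : q = p / (p - 1))
    (T₁ T₂ : H →L[ℂ] H) (hT₁ : MemSp p T₁) (hT₂ : MemSp p T₂) :
    (schattenNorm p (T₁ + T₂) ^ q + schattenNorm p (T₁ - T₂) ^ q) ^ (1 / q) ≤
      (2 : ℝ) ^ (1 / q) * (schattenNorm p T₁ ^ p + schattenNorm p T₂ ^ p) ^ (1 / p) := by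
  have hp0 : 0 < p := by linarith
  have hq0 : 0 < q := by rw [hq]; exact div_pos hp0 (by linarith)
  have hqp : 0 < q / p := by positivity
  have hterm : ∀ (T : H →L[ℂ] H) (n : ℕ), 0 ≤ sValue T n ^ p := fun T n =>
    Real.rpow_nonneg (sValue_nonneg T n) _
  have hnonneg : ∀ (T : H →L[ℂ] H) (N : ℕ), 0 ≤ ∑ n ∈ Finset.range N, sValue T n ^ p :=
    fun T N => Finset.sum_nonneg fun n _ => hterm T n
  have htsum : ∀ T : H →L[ℂ] H, 0 ≤ ∑' n, sValue T n ^ p := fun T => tsum_nonneg (hterm T)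
  have hpow : ∀ (T : H →L[ℂ] H) (t : ℝ),
      schattenNorm p T ^ t = (∑' n, sValue T n ^ p) ^ (t / p) := fun T t => by
    rw [schattenNorm, ← Real.rpow_mul (htsum T), one_div_mul_eq_div]
  simp only [hpow, div_self hp0.ne', Real.rpow_one]
  have hN := hT₁.clarkson_range hp1 hp2 hq hT₂
  set R := (2 : ℝ) ^ (1 / q) * (∑' n, sValue T₁ n ^ p + ∑' n, sValue T₂ n ^ p) ^ (1 / p)
  have hbound : ∀ x y : ℝ, 0 ≤ x → 0 ≤ y → (x ^ (q / p) + y ^ (q / p)) ^ (1 / q) ≤ R →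
      x ≤ R ^ p := fun x y hx hy h => by
    have h1 : x ^ (1 / p) ≤ R := by
      refine le_trans ?_ h
      calc x ^ (1 / p) = (x ^ (q / p)) ^ (1 / q) := by
            rw [← Real.rpow_mul hx]; congr 1; field_simp
        _ ≤ _ := by
            gcongr
            exact le_add_of_nonneg_right (Real.rpow_nonneg hy _)
    calc x = (x ^ (1 / p)) ^ p := by
          rw [← Real.rpow_mul hx, one_div_mul_cancel hp0.ne', Real.rpow_one]
      _ ≤ R ^ p := by gcongr
  have hS : Summable fun n => sValue (T₁ + T₂) n ^ p :=
    summable_of_sum_range_le (hterm _) fun N => hbound _ _ (hnonneg _ N) (hnonneg _ N) (hN N)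
  have hD : Summable fun n => sValue (T₁ - T₂) n ^ p :=
    summable_of_sum_range_le (hterm _) fun N =>
      hbound _ _ (hnonneg _ N) (hnonneg _ N) (by rw [add_comm]; exact hN N)
  exact le_of_tendsto' (((hS.hasSum.tendsto_sum_nat.rpow_const (Or.inr hqp.le)).add
    (hD.hasSum.tendsto_sum_nat.rpow_const (Or.inr hqp.le))).rpow_const
      (Or.inr (by positivity))) hN
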